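/- Let X be a metric space, x₀ ∈ X, and let φ : X → ℝ be a bounded continuous Higson function. Given disjoint subsets U, V ⊆ X with d(x,U)+d(x,V) ≠ 0 for all x, the function φ(x) = d(x,U)/(d(x,U)+d(x,V)) satisfies φ|_U ≡ 0 and φ|_V ≡ 1; moreover if U and V are coarsely disjoint then φ is a Higson function, i.e., for every entourage E ⊆ X² and every ε > 0 there is a bounded set K ⊆ X such that |φ(y) − φ(x)| < ε for all (x,y) ∈ E with x,y ∉ K. -/

import Mathlib

open Set Bornology Metric

/-- `E ⊆ X × X` is an entourage if `sup_{(x,y) ∈ E} d(x,y) < ∞`. -/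
def IsEnt {X : Type*} [PseudoMetricSpace X] (E : Set (X × X)) : Prop :=
  ∃ C : ℝ, ∀ p ∈ E, dist p.1 p.2 ≤ C

/-- `E[A] = {y : ∃ a ∈ A, (a,y) ∈ E}`. -/
def entImg {X : Type*} [PseudoMetricSpace X] (E : Set (X × X)) (A : Set X) : Set X :=
  {y | ∃ a ∈ A, (a, y) ∈ E}

/-- `A` and `B` are not coarsely disjoint: some entourage `E` has `E[A] ∩ E[B]` unbounded. -/
def NotCD {X : Type*} [PseudoMetricSpace X] (A B : Set X) : Prop :=
  ∃ E : Set (X × X), IsEnt E ∧ ¬ IsBounded (entImg E A ∩ entImg E B)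

/-- `A` and `B` are coarsely disjoint: every entourage `E` has `E[A] ∩ E[B]` bounded. -/
def CD {X : Type*} [PseudoMetricSpace X] (A B : Set X) : Prop :=
  ∀ E : Set (X × X), IsEnt E → IsBounded (entImg E A ∩ entImg E B)

/-- Coarsely uniform: `f × f` maps entourages to entourages. -/
def CUnif {X Y : Type*} [PseudoMetricSpace X] [PseudoMetricSpace Y] (f : X → Y) : Prop :=
  ∀ E : Set (X × X), IsEnt E → IsEnt ((fun p : X × X => (f p.1, f p.2)) '' E)

/-- Coarsely proper: preimages of bounded sets are bounded. -/
def CProper {X Y : Type*} [PseudoMetricSpace X] [PseudoMetricSpace Y] (f : X → Y) : Prop :=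
  ∀ B : Set Y, IsBounded B → IsBounded (f ⁻¹' B)

/-- A coarse map is coarsely uniform and coarsely proper. -/
def Coarse {X Y : Type*} [PseudoMetricSpace X] [PseudoMetricSpace Y] (f : X → Y) : Prop :=
  CUnif f ∧ CProper f

/-- Coarsely injective: `(f × f)⁻¹` of any entourage is an entourage. -/
def CInj {X Y : Type*} [PseudoMetricSpace X] [PseudoMetricSpace Y] (f : X → Y) : Prop :=
  ∀ F : Set (Y × Y), IsEnt F → IsEnt ((fun p : X × X => (f p.1, f p.2)) ⁻¹' F)

/-- A coarse ultrafilter on a metric space. -/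
structure CUF (X : Type*) [PseudoMetricSpace X] where
  sets : Set (Set X)
  pairClose : ∀ A ∈ sets, ∀ B ∈ sets, NotCD A B
  split : ∀ A B : Set X, A ∪ B ∈ sets → A ∈ sets ∨ B ∈ sets
  univ_mem : Set.univ ∈ sets

/-- Pushforward system of sets of a coarse ultrafilter along a map. -/
def push {X Y : Type*} [PseudoMetricSpace X] [PseudoMetricSpace Y] (f : X → Y) (F : CUF X) :
    Set (Set Y) :=
  {A : Set Y | f ⁻¹' A ∈ F.sets}

/-- Asymptotically alike coarse ultrafilters. -/
def AAlike {X : Type*} [PseudoMetricSpace X] (F G : CUF X) : Prop :=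
  ∀ A ∈ F.sets, ∀ B ∈ G.sets, NotCD A B

/-- Asymptotically alike, on raw systems of subsets. -/
def AAlikeS {X : Type*} [PseudoMetricSpace X] (S T : Set (Set X)) : Prop :=
  ∀ A ∈ S, ∀ B ∈ T, NotCD A B

/-! As `d(·,U)` and `d(·,V)` are `1`-Lipschitz, moving a point `x` by at most `C` to a point `y`
changes `d(x,U)/(d(x,U)+d(x,V))` by at most `C/(d(y,U)+d(y,V))`. Coarse disjointness says that
the denominator is large outside a bounded set, so this change tends to `0` at infinity. -/

lemma abs_div_add_sub_div_add_le {𝕜 : Type*} [Field 𝕜] [LinearOrder 𝕜] [IsStrictOrderedRing 𝕜]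
    {a b a' b' C : 𝕜} (ha : 0 ≤ a) (hb : 0 ≤ b) (h : 0 < a + b) (h' : 0 < a' + b')
    (haC : |a' - a| ≤ C) (hbC : |b' - b| ≤ C) :
    |a' / (a' + b') - a / (a + b)| ≤ C / (a' + b') := by
  have numerator_le : |(a' - a) * b - a * (b' - b)| ≤ C * (a + b) :=
    calc |(a' - a) * b - a * (b' - b)|
        ≤ |(a' - a) * b| + |a * (b' - b)| := abs_sub _ _
      _ = |a' - a| * b + a * |b' - b| := by
          rw [abs_mul, abs_mul, abs_of_nonneg ha, abs_of_nonneg hb]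
      _ ≤ C * b + a * C := by gcongr
      _ = C * (a + b) := by ring
  calc |a' / (a' + b') - a / (a + b)|
      = |((a' - a) * b - a * (b' - b)) / ((a' + b') * (a + b))| := by
        rw [div_sub_div _ _ h'.ne' h.ne']
        ring_nf
    _ = |(a' - a) * b - a * (b' - b)| / ((a' + b') * (a + b)) := by
        rw [abs_div, abs_of_pos (mul_pos h' h)]
    _ ≤ C * (a + b) / ((a' + b') * (a + b)) := by gcongr
    _ = C / (a' + b') := mul_div_mul_right _ _ h.ne'

section PseudoMetricSpace

variable {X : Type*} [PseudoMetricSpace X] {U V : Set X}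

/-- The condition at infinity in the definition of a Higson function: the variation of `f` along
any entourage vanishes at infinity. Boundedness and continuity of `f` are not included. -/
def HasVanishingVariation (f : X → ℝ) : Prop :=
  ∀ E : Set (X × X), IsEnt E → ∀ ε > (0 : ℝ), ∃ K : Set X, IsBounded K ∧
    ∀ p ∈ E, p.1 ∉ K → p.2 ∉ K → |f p.2 - f p.1| < ε

/-- The Urysohn-type function `d(x,U)/(d(x,U)+d(x,V))`, separating `U` from `V`. Its value is `0`
where the denominator vanishes; recall also that `infDist x ∅ = 0`. -/
noncomputable def infDistRatio (U V : Set X) (x : X) : ℝ :=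
  infDist x U / (infDist x U + infDist x V)

lemma hasVanishingVariation_const (c : ℝ) : HasVanishingVariation fun _ : X => c :=
  fun _ _ ε hε => ⟨∅, isBounded_empty, fun _ _ _ _ => by rwa [sub_self, abs_zero]⟩

lemma CD.isBounded_setOf_infDist_add_infDist_le (h : CD U V) (hU : U.Nonempty) (hV : V.Nonempty)
    (R : ℝ) : IsBounded {x | infDist x U + infDist x V ≤ R} := by
  refine (h {p | dist p.1 p.2 ≤ R + 1} ⟨R + 1, fun _ hp => hp⟩).subset fun x hx => ?_
  have hxR : infDist x U + infDist x V ≤ R := hx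
  have hxU : infDist x U < R + 1 := by linarith [infDist_nonneg (x := x) (s := V)]
  have hxV : infDist x V < R + 1 := by linarith [infDist_nonneg (x := x) (s := U)]
  obtain ⟨u, hu, hxu⟩ := (infDist_lt_iff hU).1 hxU
  obtain ⟨v, hv, hxv⟩ := (infDist_lt_iff hV).1 hxV
  exact ⟨⟨u, hu, (dist_comm u x).trans_le hxu.le⟩, ⟨v, hv, (dist_comm v x).trans_le hxv.le⟩⟩

lemma infDistRatio_eq_zero {x : X} (hU : infDist x U = 0) : infDistRatio U V x = 0 := by
  rw [infDistRatio, hU, zero_div]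

lemma infDistRatio_eq_one {x : X} (hU : infDist x U ≠ 0) (hV : infDist x V = 0) :
    infDistRatio U V x = 1 := by
  rw [infDistRatio, hV, add_zero, div_self hU]

lemma abs_infDistRatio_sub_le {x y : X} (hx : infDist x U + infDist x V ≠ 0)
    (hy : infDist y U + infDist y V ≠ 0) :
    |infDistRatio U V y - infDistRatio U V x| ≤ dist y x / (infDist y U + infDist y V) :=
  abs_div_add_sub_div_add_le infDist_nonneg infDist_nonneg
    ((add_nonneg infDist_nonneg infDist_nonneg).lt_of_ne' hx)
    ((add_nonneg infDist_nonneg infDist_nonneg).lt_of_ne' hy)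
    (by simpa [Real.dist_eq] using (lipschitz_infDist_pt U).dist_le_mul y x)
    (by simpa [Real.dist_eq] using (lipschitz_infDist_pt V).dist_le_mul y x)

lemma CD.hasVanishingVariation_infDistRatio_of_nonempty (h : CD U V) (hU : U.Nonempty)
    (hV : V.Nonempty) : HasVanishingVariation (infDistRatio U V) := by
  rintro E ⟨C, hC⟩ ε hε
  have hK := h.isBounded_setOf_infDist_add_infDist_le hU hV (max 0 (C / ε))
  refine ⟨_, hK, fun p hp hp₁ hp₂ => ?_⟩
  simp only [mem_ofPred_eq, not_le, max_lt_iff] at hp₁ hp₂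
  obtain ⟨pos₁, -⟩ := hp₁
  obtain ⟨pos₂, large₂⟩ := hp₂
  calc |infDistRatio U V p.2 - infDistRatio U V p.1|
      ≤ dist p.2 p.1 / (infDist p.2 U + infDist p.2 V) := abs_infDistRatio_sub_le pos₁.ne' pos₂.ne'
    _ ≤ C / (infDist p.2 U + infDist p.2 V) := by
        rw [dist_comm]
        gcongr
        exact hC p hp
    _ < ε := (div_lt_comm₀ hε pos₂).1 large₂

lemma CD.hasVanishingVariation_infDistRatio (h : CD U V)
    (hne : ∀ x, infDist x U + infDist x V ≠ 0) : HasVanishingVariation (infDistRatio U V) := by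
  rcases U.eq_empty_or_nonempty with rfl | hU
  · have eq_zero : infDistRatio ∅ V = fun _ => 0 := funext fun _ =>
      infDistRatio_eq_zero infDist_empty
    rw [eq_zero]
    exact hasVanishingVariation_const 0
  rcases V.eq_empty_or_nonempty with rfl | hV
  · have eq_one : infDistRatio U ∅ = fun _ => 1 := funext fun x =>
      infDistRatio_eq_one (by simpa only [infDist_empty, add_zero] using hne x) infDist_empty
    rw [eq_one]
    exact hasVanishingVariation_const 1
  exact h.hasVanishingVariation_infDistRatio_of_nonempty hU hV

end PseudoMetricSpace

theorem stmt8_general {X : Type*} [PseudoMetricSpace X] (U V : Set X)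
    (hne : ∀ x : X, infDist x U + infDist x V ≠ 0) :
    (∀ x ∈ U, infDistRatio U V x = 0) ∧
    (∀ x ∈ V, infDistRatio U V x = 1) ∧
    (CD U V → HasVanishingVariation (infDistRatio U V)) := by
  refine ⟨fun x hx => infDistRatio_eq_zero (infDist_zero_of_mem hx), fun x hx => ?_,
    fun h => h.hasVanishingVariation_infDistRatio hne⟩
  have hxV : infDist x V = 0 := infDist_zero_of_mem hx
  exact infDistRatio_eq_one (by simpa only [hxV, add_zero] using hne x) hxV

/-- the Urysohn-type function `x ↦ d(x,U)/(d(x,U)+d(x,V))` is `0` on `U`,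
`1` on `V`, and is a Higson function whenever `U` and `V` are coarsely disjoint. -/
theorem stmt8 {X : Type*} [MetricSpace X] (U V : Set X) (hUV : Disjoint U V)
    (hne : ∀ x : X, infDist x U + infDist x V ≠ 0) :
    (∀ x ∈ U, infDist x U / (infDist x U + infDist x V) = 0) ∧
    (∀ x ∈ V, infDist x U / (infDist x U + infDist x V) = 1) ∧
    (CD U V → ∀ E : Set (X × X), IsEnt E → ∀ ε > (0 : ℝ), ∃ K : Set X, IsBounded K ∧
      ∀ p ∈ E, p.1 ∉ K → p.2 ∉ K →
        |infDist p.2 U / (infDist p.2 U + infDist p.2 V) -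
          infDist p.1 U / (infDist p.1 U + infDist p.1 V)| < ε) :=
  stmt8_general U V hne
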